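/- Let F = (R, Σ) be a subset-free congestion game form containing a bad configuration: resources A, C and strategies s1, s2, s3 ∈ Σ with A ∈ (s1 ∩ s3) \ s2 and C ∈ (s1 ∩ s2) \ s3. If every monotone symmetric congestion game G ∈ 𝒢(F) satisfies Z(G) = NE(G), then there exists a strategy s4 ∈ Σ with s4 ≠ s2, s4 ⊆ s2 ∪ (s3 \ s1), and s4 ∩ (s3 \ (s1 ∪ s2)) ≠ ∅. -/

import Mathlib

/-!
Any `s4 ∈ SS` with `s4 ≠ s2` and `s4 ⊆ s2 ∪ (s3 \ s1)` meets `s3 \ (s1 ∪ s2)`, since otherwise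
`s4 ⊆ s2`, against subset-freeness. So suppose that `s2` is the only strategy inside
`s2 ∪ (s3 \ s1)`; then the following two-player game has a greedy profile, `(s1, s2)`, that is
not an equilibrium.

A resource used by one player pays `0` inside `s1 ∪ s2 ∪ s3` and `-L` outside, so `s1` is an
optimal first choice. A second user lowers the payoff by `L` on `s1 \ s2`, by `N + 1` at `C`,
and by `1` elsewhere, where `N` is the number of resources and `L = N (N + 1)`. Every strategy
other than `s2` leaves `s2 ∪ (s3 \ s1)`, hence contains a resource of `s1 \ s2` or one outside
`s1 ∪ s2 ∪ s3`, and so pays at most `-L` against `s1`; the strategy `s2` pays at least `-L`.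
But against `s2` the first player gets at most `-(N + 1)` from `s1`, because of `C`, and at
least `-N` from `s3`, which avoids `C`.
-/

open Finset

/-- Congestion of resource `r` under strategy profile `s` (players `ι`). -/
def cgCong {ρ ι : Type} [DecidableEq ρ] [Fintype ι] (s : ι → Finset ρ) (r : ρ) : ℕ :=
  (Finset.univ.filter (fun i => r ∈ s i)).card

/-- Utility of player `i`: the sum of `P r (c(s)_r)` over the resources she uses. -/
def cgUtil {ρ ι : Type} [DecidableEq ρ] [Fintype ι] (P : ρ → ℕ → ℝ)
    (s : ι → Finset ρ) (i : ι) : ℝ :=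
  ∑ r ∈ s i, P r (cgCong s r)

/-- A strategy profile: every player selects a strategy from the strategy set `SS`. -/
def IsProfile {ρ ι : Type} (SS : Finset (Finset ρ)) (s : ι → Finset ρ) : Prop :=
  ∀ i, s i ∈ SS

/-- Pure Nash equilibrium. -/
def IsNE {ρ ι : Type} [DecidableEq ρ] [DecidableEq ι] [Fintype ι]
    (SS : Finset (Finset ρ)) (P : ρ → ℕ → ℝ) (s : ι → Finset ρ) : Prop :=
  IsProfile SS s ∧
    ∀ i : ι, ∀ t ∈ SS, cgUtil P s i ≥ cgUtil P (Function.update s i t) i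

/-- The congestion seen by player `i` on resource `r` from players preceding her
in the order `π`. -/
def greedyCong {ρ ι : Type} [DecidableEq ρ] [Fintype ι] (s : ι → Finset ρ)
    (π : ι → ℕ) (i : ι) (r : ρ) : ℕ :=
  (Finset.univ.filter (fun j => r ∈ s j ∧ π j < π i)).card

/-- Greedy profile: for some linear order (injective ranking `π`) of the players,
each player's strategy is a best response to the choices of her predecessors. -/
def IsGreedy {ρ ι : Type} [DecidableEq ρ] [Fintype ι]
    (SS : Finset (Finset ρ)) (P : ρ → ℕ → ℝ) (s : ι → Finset ρ) : Prop :=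
  IsProfile SS s ∧
    ∃ π : ι → ℕ, Function.Injective π ∧ ∀ i : ι, ∀ t ∈ SS,
      (∑ r ∈ s i, P r (greedyCong s π i r + 1)) ≥
        ∑ r ∈ t, P r (greedyCong s π i r + 1)

/-- Monotone resource payoffs (for a game with `n` players):
`P_r(k) > P_r(l)` whenever `1 ≤ k < l ≤ n`. -/
def MonotonePay {ρ : Type} (n : ℕ) (P : ρ → ℕ → ℝ) : Prop :=
  ∀ r : ρ, ∀ k l : ℕ, 1 ≤ k → k < l → l ≤ n → P r k > P r l

/-- A congestion game form: nonempty strategy set consisting of nonempty resource sets. -/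
def ValidForm {ρ : Type} (SS : Finset (Finset ρ)) : Prop :=
  SS.Nonempty ∧ ∀ s ∈ SS, s.Nonempty

/-- Subset-free strategy set. -/
def SubsetFree {ρ : Type} (SS : Finset (Finset ρ)) : Prop :=
  ∀ s ∈ SS, ∀ t ∈ SS, s ≠ t → ¬ s ⊆ t

/-- A bad configuration (Holzman–Law Yone): a form is tree representable iff
it has no bad configuration. -/
def BadConfig {ρ : Type} (SS : Finset (Finset ρ)) : Prop :=
  ∃ A B : ρ, ∃ s1 ∈ SS, ∃ s2 ∈ SS, ∃ s3 ∈ SS,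
    A ∈ s1 ∧ B ∈ s1 ∧ A ∈ s2 ∧ A ∉ s3 ∧ B ∈ s3 ∧ B ∉ s2

/-- Payoff drop caused by a second user of `r`: `L` on `s1 \ s2`, `D` at `C`, else `1`. -/
def badDrop {ρ : Type} [DecidableEq ρ] (s1 s2 : Finset ρ) (C : ρ) (L D : ℝ) (r : ρ) : ℝ :=
  if r ∈ s1 \ s2 then L else if r = C then D else 1

/-- Payoff of `r` to a single user: `0` on `s1 ∪ s2 ∪ s3` and `-L` outside. -/
def badBase {ρ : Type} [DecidableEq ρ] (s1 s2 s3 : Finset ρ) (L : ℝ) (r : ρ) : ℝ :=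
  if r ∈ s1 ∪ s2 ∪ s3 then 0 else -L

theorem sum_le_of_mem_of_nonpos {ρ : Type} {t : Finset ρ} {f : ρ → ℝ} (hf : ∀ r, f r ≤ 0)
    {r : ρ} (hr : r ∈ t) {c : ℝ} (h : f r ≤ c) : ∑ r ∈ t, f r ≤ c := by
  have := Finset.single_le_sum (f := fun r => -f r) (fun i _ => by linarith [hf i]) hr
  simp only [Finset.sum_neg_distrib] at this
  linarith

theorem neg_card_mul_le_sum {ρ : Type} [Fintype ρ] {t : Finset ρ} {f : ρ → ℝ} {c : ℝ}
    (hc : 0 ≤ c) (hf : ∀ r ∈ t, -c ≤ f r) : -((Fintype.card ρ : ℝ) * c) ≤ ∑ r ∈ t, f r := by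
  have h := Finset.card_nsmul_le_sum t f (-c) hf
  have h2 : (t.card : ℝ) ≤ Fintype.card ρ := by exact_mod_cast Finset.card_le_univ t
  rw [nsmul_eq_mul] at h
  nlinarith

/-- Given a bad configuration `(A, C, s1, s2, s3)` in a subset-free form: if
every monotone game with this form satisfies `Z(G) = NE(G)`, then there is a
strategy `s4 ≠ s2` with `s4 ⊆ s2 ∪ (s3 \ s1)` meeting `s3 \ (s1 ∪ s2)`. -/
theorem exists_s4_meeting_s3 {ρ : Type} [DecidableEq ρ] [Fintype ρ]
    (SS : Finset (Finset ρ)) (hform : ValidForm SS) (hsf : SubsetFree SS)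
    (A C : ρ) (s1 s2 s3 : Finset ρ)
    (h1 : s1 ∈ SS) (h2 : s2 ∈ SS) (h3 : s3 ∈ SS)
    (hA1 : A ∈ s1) (hA3 : A ∈ s3) (hA2 : A ∉ s2)
    (hC1 : C ∈ s1) (hC2 : C ∈ s2) (hC3 : C ∉ s3)
    (hZN : ∀ n : ℕ, 1 ≤ n → ∀ P : ρ → ℕ → ℝ, MonotonePay n P →
      ∀ s : Fin n → Finset ρ, (IsGreedy SS P s ↔ IsNE SS P s)) :
    ∃ s4 ∈ SS, s4 ≠ s2 ∧ s4 ⊆ s2 ∪ (s3 \ s1) ∧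
      (s4 ∩ (s3 \ (s1 ∪ s2))).Nonempty := by
  by_contra hno
  have key : ∀ t ∈ SS, t ≠ s2 → ∃ r ∈ t, r ∉ s2 ∪ (s3 \ s1) := by
    intro t ht hne
    by_contra! hsub
    refine hno ⟨t, ht, hne, hsub, ?_⟩
    obtain ⟨r, hr, hr2⟩ := Finset.not_subset.1 (hsf t ht s2 h2 hne)
    have := hsub r hr
    refine ⟨r, ?_⟩
    simp only [mem_union, mem_sdiff, mem_inter] at this ⊢
    tauto
  set N : ℝ := (Fintype.card ρ : ℝ) with hN
  have hN1 : 1 ≤ N := by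
    have : 0 < Fintype.card ρ := Fintype.card_pos_iff.2 ⟨C⟩
    rw [hN]
    exact_mod_cast this
  set L : ℝ := N * (N + 1) with hL
  have hLpos : 0 < L := by positivity
  set d : ρ → ℝ := badDrop s1 s2 C L (N + 1) with hd
  set b : ρ → ℝ := badBase s1 s2 s3 L with hb
  have hdpos : ∀ r, 0 < d r := by
    intro r
    simp only [hd, badDrop]
    split_ifs <;> linarith
  have hb0 : ∀ r, b r ≤ 0 := by
    intro r
    simp only [hb, badBase]
    split_ifs <;> linarith
  have hbin : ∀ r, r ∈ s1 ∪ s2 ∪ s3 → b r = 0 := fun r hr => by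
    rw [hb, badBase, if_pos hr]
  set P : ρ → ℕ → ℝ := fun r k => b r - ((k : ℝ) - 1) * d r with hP
  have hmono : MonotonePay 2 P := by
    intro r k l _ hkl _
    have : (k : ℝ) < l := by exact_mod_cast hkl
    simp only [hP]
    nlinarith [hdpos r]
  have hP0 : ∀ r k, 1 ≤ k → P r k ≤ 0 := by
    intro r k hk
    have : (1 : ℝ) ≤ k := by exact_mod_cast hk
    simp only [hP]
    nlinarith [hdpos r, hb0 r]
  have hP1 : ∀ r, P r 1 = b r := fun r => by simp [hP]
  have hP2 : ∀ r, P r 2 = b r - d r := fun r => by simp only [hP]; push_cast; ring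
  have hg : IsGreedy SS P (![s1, s2] : Fin 2 → Finset ρ) := by
    refine ⟨fun i => by fin_cases i <;> simpa, Fin.val, Fin.val_injective, ?_⟩
    intro i t ht
    fin_cases i
    · have hc : ∀ r, greedyCong (![s1, s2] : Fin 2 → Finset ρ) Fin.val 0 r = 0 := by
        intro r
        simp [greedyCong]
      simp only [Fin.zero_eta, hc, zero_add, hP1, Matrix.cons_val_zero]
      rw [Finset.sum_eq_zero (s := s1) (fun r hr => hbin r (by simp [hr]))]
      exact Finset.sum_nonpos fun r _ => hb0 r
    · have hc : ∀ r, greedyCong (![s1, s2] : Fin 2 → Finset ρ) Fin.val 1 r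
          = if r ∈ s1 then 1 else 0 := by
        intro r
        rw [greedyCong, Finset.card_filter, Fin.sum_univ_two]
        simp
      simp only [Fin.mk_one, hc, Matrix.cons_val_one, Matrix.cons_val_fin_one]
      by_cases hts : t = s2
      · rw [hts]
      · obtain ⟨r, hr, hr'⟩ := key t ht hts
        have hup : ∑ r ∈ t, P r ((if r ∈ s1 then 1 else 0) + 1) ≤ -L := by
          refine sum_le_of_mem_of_nonpos (fun r => hP0 r _ (by omega)) hr ?_
          simp only [mem_union, mem_sdiff, not_or, not_and, not_not] at hr'
          by_cases hr1 : r ∈ s1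
          · have : d r = L := by simp [hd, badDrop, hr1, hr'.1]
            simp only [hr1, if_true, Nat.reduceAdd, hP2, this]
            linarith [hb0 r]
          · have hr3 : r ∉ s3 := fun h => hr1 (hr'.2 h)
            simp [hr1, hP1, hb, badBase, hr'.1, hr3]
        have hlow : -L ≤ ∑ r ∈ s2, P r ((if r ∈ s1 then 1 else 0) + 1) := by
          refine neg_card_mul_le_sum (by linarith) fun r hr => ?_
          have hbr := hbin r (by simp [hr])
          have hdr : d r ≤ N + 1 := by
            simp only [hd, badDrop, mem_sdiff, hr, not_true, and_false, if_false]
            split_ifs <;> linarith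
          split_ifs
          · simp only [Nat.reduceAdd, hP2]
            linarith
          · simp only [zero_add, hP1]
            linarith
        linarith
  have hne := ((hZN 2 (by norm_num) P hmono _).1 hg).2 0 s3 h3
  have hc : ∀ (u : Finset ρ) r, cgCong (![u, s2] : Fin 2 → Finset ρ) r
      = (if r ∈ u then 1 else 0) + if r ∈ s2 then 1 else 0 := by
    intro u r
    rw [cgCong, Finset.card_filter, Fin.sum_univ_two]
    simp only [Matrix.cons_val_zero, Matrix.cons_val_one, Matrix.cons_val_fin_one]
    congr
  have hupd : Function.update (![s1, s2] : Fin 2 → Finset ρ) 0 s3 = ![s3, s2] := by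
    ext i : 1
    fin_cases i <;> simp
  have hval : ∀ u : Finset ρ, cgUtil P (![u, s2] : Fin 2 → Finset ρ) 0
      = ∑ r ∈ u, P r (1 + if r ∈ s2 then 1 else 0) := by
    intro u
    simp only [cgUtil, hc, Matrix.cons_val_zero]
    exact Finset.sum_congr rfl fun r hr => by simp [hr]
  rw [hupd, hval, hval] at hne
  have hup : ∑ r ∈ s1, P r (1 + if r ∈ s2 then 1 else 0) ≤ -(N + 1) := by
    refine sum_le_of_mem_of_nonpos (fun r => hP0 r _ (by omega)) hC1 ?_
    have : d C = N + 1 := by simp [hd, badDrop, hC2]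
    simp only [hC2, if_true, Nat.reduceAdd, hP2, this]
    linarith [hb0 C]
  have hlow : -(N * 1) ≤ ∑ r ∈ s3, P r (1 + if r ∈ s2 then 1 else 0) := by
    refine neg_card_mul_le_sum (by norm_num) fun r hr => ?_
    have hbr := hbin r (by simp [hr])
    by_cases hr2 : r ∈ s2
    · have hrC : r ≠ C := fun h => hC3 (h ▸ hr)
      have : d r = 1 := by simp [hd, badDrop, hr2, hrC]
      simp only [hr2, if_true, Nat.reduceAdd, hP2, this]
      linarith
    · simp only [hr2, if_false, add_zero, hP1]
      linarith
  linarith
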